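/- For the group-algebra Frobenius algebra A = k[ℤ/2] over a field k, the space Z²_f(A;A) of Frobenius 2-cocycles — the k-subspace of Hom_k(A⊗A, A) × Hom_k(A, A⊗A) consisting of pairs (φ₁,φ₂) with d^{2,1}(φ₁) = 0, d^{2,2}_{(1)}(φ₁,φ₂) = 0 and d^{2,3}(φ₂) = 0 — has dimension 6 over k. -/

import Mathlib

open TensorProduct

noncomputable section

variable (k A : Type*) [Field k] [Ring A] [Algebra k A]

/-- Multiplication `μ : A ⊗[k] A → A` as a `k`-linear map. -/
def mu : A ⊗[k] A →ₗ[k] A := LinearMap.mul' k A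

/-- The standard associator `(A⊗A)⊗A ≃ A⊗(A⊗A)`. -/
def asso : ((A ⊗[k] A) ⊗[k] A) ≃ₗ[k] (A ⊗[k] (A ⊗[k] A)) := TensorProduct.assoc k A A A

/-- The flip `τ : A⊗A → A⊗A`, `x⊗y ↦ y⊗x`. -/
def tau : A ⊗[k] A →ₗ[k] A ⊗[k] A := (TensorProduct.comm k A A).toLinearMap

/-- A Frobenius structure on `A`: a coassociative comultiplication `Δ` satisfying the two
Frobenius compatibility conditions `Δ∘μ = (μ⊗id)∘(id⊗Δ) = (id⊗μ)∘(Δ⊗id)`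
(composites taken with the standard associator identifications). -/
def IsFrobenius (Δ : A →ₗ[k] A ⊗[k] A) : Prop :=
  (Δ.rTensor A ∘ₗ Δ = (asso k A).symm.toLinearMap ∘ₗ Δ.lTensor A ∘ₗ Δ) ∧
  (Δ ∘ₗ mu k A = (mu k A).rTensor A ∘ₗ (asso k A).symm.toLinearMap ∘ₗ Δ.lTensor A) ∧
  (Δ ∘ₗ mu k A = (mu k A).lTensor A ∘ₗ (asso k A).toLinearMap ∘ₗ Δ.rTensor A)

/-- `R : A⊗A → A⊗A` satisfies the Yang–Baxter equation:
`(R⊗id)∘(id⊗R)∘(R⊗id) = (id⊗R)∘(R⊗id)∘(id⊗R)` on `A⊗A⊗A`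
(with the standard associator identifications). -/
def YBE (R : A ⊗[k] A →ₗ[k] A ⊗[k] A) : Prop :=
  R.rTensor A ∘ₗ
      ((asso k A).symm.toLinearMap ∘ₗ R.lTensor A ∘ₗ (asso k A).toLinearMap) ∘ₗ
      R.rTensor A =
    ((asso k A).symm.toLinearMap ∘ₗ R.lTensor A ∘ₗ (asso k A).toLinearMap) ∘ₗ
      R.rTensor A ∘ₗ
      ((asso k A).symm.toLinearMap ∘ₗ R.lTensor A ∘ₗ (asso k A).toLinearMap)

/-- `d^{1,1}(h) = μ∘(h⊗id) + μ∘(id⊗h) − h∘μ`. -/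
def d11 (h : A →ₗ[k] A) : A ⊗[k] A →ₗ[k] A :=
  mu k A ∘ₗ h.rTensor A + mu k A ∘ₗ h.lTensor A - h ∘ₗ mu k A

/-- `d^{1,2}(h) = (h⊗id)∘Δ + (id⊗h)∘Δ − Δ∘h`. -/
def d12 (Δ : A →ₗ[k] A ⊗[k] A) (h : A →ₗ[k] A) : A →ₗ[k] A ⊗[k] A :=
  h.rTensor A ∘ₗ Δ + h.lTensor A ∘ₗ Δ - Δ ∘ₗ h

/-- `d^{2,1}(φ₁) = μ∘(φ₁⊗id) + φ₁∘(μ⊗id) − μ∘(id⊗φ₁) − φ₁∘(id⊗μ)`. -/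
def d21 (φ₁ : A ⊗[k] A →ₗ[k] A) : ((A ⊗[k] A) ⊗[k] A) →ₗ[k] A :=
  mu k A ∘ₗ φ₁.rTensor A + φ₁ ∘ₗ (mu k A).rTensor A
  - mu k A ∘ₗ φ₁.lTensor A ∘ₗ (asso k A).toLinearMap
  - φ₁ ∘ₗ (mu k A).lTensor A ∘ₗ (asso k A).toLinearMap

/-- `d^{2,2}_{(1)}(φ₁,φ₂) = Δ∘φ₁ + φ₂∘μ − (φ₁⊗id)∘(id⊗Δ) − (μ⊗id)∘(id⊗φ₂)`. -/
def d221 (Δ : A →ₗ[k] A ⊗[k] A) (φ₁ : A ⊗[k] A →ₗ[k] A) (φ₂ : A →ₗ[k] A ⊗[k] A) :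
    A ⊗[k] A →ₗ[k] A ⊗[k] A :=
  Δ ∘ₗ φ₁ + φ₂ ∘ₗ mu k A
  - φ₁.rTensor A ∘ₗ (asso k A).symm.toLinearMap ∘ₗ Δ.lTensor A
  - (mu k A).rTensor A ∘ₗ (asso k A).symm.toLinearMap ∘ₗ φ₂.lTensor A

/-- `d^{2,2}_{(2)}(φ₁,φ₂) = Δ∘φ₁ + φ₂∘μ − (id⊗φ₁)∘(Δ⊗id) − (id⊗μ)∘(φ₂⊗id)`. -/
def d222 (Δ : A →ₗ[k] A ⊗[k] A) (φ₁ : A ⊗[k] A →ₗ[k] A) (φ₂ : A →ₗ[k] A ⊗[k] A) :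
    A ⊗[k] A →ₗ[k] A ⊗[k] A :=
  Δ ∘ₗ φ₁ + φ₂ ∘ₗ mu k A
  - φ₁.lTensor A ∘ₗ (asso k A).toLinearMap ∘ₗ Δ.rTensor A
  - (mu k A).lTensor A ∘ₗ (asso k A).toLinearMap ∘ₗ φ₂.rTensor A

/-- `d^{2,3}(φ₂) = (φ₂⊗id)∘Δ + (Δ⊗id)∘φ₂ − (id⊗φ₂)∘Δ − (id⊗Δ)∘φ₂`. -/
def d23 (Δ : A →ₗ[k] A ⊗[k] A) (φ₂ : A →ₗ[k] A ⊗[k] A) :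
    A →ₗ[k] (A ⊗[k] A) ⊗[k] A :=
  φ₂.rTensor A ∘ₗ Δ + Δ.rTensor A ∘ₗ φ₂
  - (asso k A).symm.toLinearMap ∘ₗ φ₂.lTensor A ∘ₗ Δ
  - (asso k A).symm.toLinearMap ∘ₗ Δ.lTensor A ∘ₗ φ₂

/-- The group algebra `k[ℤ/2]`. -/
abbrev GroupAlg (K : Type*) [Field K] := MonoidAlgebra K (Multiplicative (ZMod 2))

/-- The generator `g` of `ℤ/2` inside `k[ℤ/2]`. -/
def gElt (K : Type*) [Field K] : GroupAlg K :=
  MonoidAlgebra.of K (Multiplicative (ZMod 2)) (Multiplicative.ofAdd (1 : ZMod 2))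

section Helpers

variable {K : Type*} [Field K] {A : Type*} [Ring A] [Algebra K A]

/-- The first component of the general cocycle with parameters `c`. -/
def zphi1 (B : Module.Basis (Fin 2) K A) (c : Fin 6 → K) : A ⊗[K] A →ₗ[K] A :=
  (B.tensorProduct B).constr K (fun ij =>
    (![![c 0 • B 0 + c 1 • B 1, c 1 • B 0 + c 0 • B 1],
       ![c 1 • B 0 + c 0 • B 1, c 2 • B 0 + c 3 • B 1]] : Fin 2 → Fin 2 → A) ij.1 ij.2)

/-- The second component of the general cocycle with parameters `c`. -/
def zphi2 (B : Module.Basis (Fin 2) K A) (c : Fin 6 → K) : A →ₗ[K] A ⊗[K] A :=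
  B.constr K
    (![c 4 • (B 0 ⊗ₜ[K] B 0) + c 5 • (B 0 ⊗ₜ[K] B 1) + c 5 • (B 1 ⊗ₜ[K] B 0)
        + (c 0 - c 2 + c 4) • (B 1 ⊗ₜ[K] B 1),
       c 5 • (B 0 ⊗ₜ[K] B 0) + c 4 • (B 0 ⊗ₜ[K] B 1) + c 4 • (B 1 ⊗ₜ[K] B 0)
        + (c 3 - c 1 + c 5) • (B 1 ⊗ₜ[K] B 1)] : Fin 2 → A ⊗[K] A)

theorem zphi1_tmul (B : Module.Basis (Fin 2) K A) (c : Fin 6 → K) (i j : Fin 2) :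
    zphi1 B c (B i ⊗ₜ[K] B j) =
    (![![c 0 • B 0 + c 1 • B 1, c 1 • B 0 + c 0 • B 1],
       ![c 1 • B 0 + c 0 • B 1, c 2 • B 0 + c 3 • B 1]] : Fin 2 → Fin 2 → A) i j := by
  rw [← Module.Basis.tensorProduct_apply, zphi1, Module.Basis.constr_basis]

theorem zphi2_apply (B : Module.Basis (Fin 2) K A) (c : Fin 6 → K) (i : Fin 2) :
    zphi2 B c (B i) =
    (![c 4 • (B 0 ⊗ₜ[K] B 0) + c 5 • (B 0 ⊗ₜ[K] B 1) + c 5 • (B 1 ⊗ₜ[K] B 0)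
        + (c 0 - c 2 + c 4) • (B 1 ⊗ₜ[K] B 1),
       c 5 • (B 0 ⊗ₜ[K] B 0) + c 4 • (B 0 ⊗ₜ[K] B 1) + c 4 • (B 1 ⊗ₜ[K] B 0)
        + (c 3 - c 1 + c 5) • (B 1 ⊗ₜ[K] B 1)] : Fin 2 → A ⊗[K] A) i := by
  rw [zphi2, Module.Basis.constr_basis]

/-- The six basis cocycles. -/
def zfam (B : Module.Basis (Fin 2) K A) (i : Fin 6) :
    (A ⊗[K] A →ₗ[K] A) × (A →ₗ[K] A ⊗[K] A) :=
  (zphi1 B (Pi.single i 1), zphi2 B (Pi.single i 1))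

theorem zfam_sum (B : Module.Basis (Fin 2) K A) (c : Fin 6 → K) :
    ∑ i, c i • zfam B i = (zphi1 B c, zphi2 B c) := by
  refine Prod.ext ?_ ?_
  · refine (B.tensorProduct B).ext fun ij => ?_
    obtain ⟨i, j⟩ := ij
    fin_cases i <;> fin_cases j <;>
      simp [zfam, zphi1_tmul, Fin.sum_univ_six, Pi.single_apply] <;> abel
  · refine B.ext fun i => ?_
    fin_cases i <;>
      simp [zfam, zphi2_apply, Fin.sum_univ_six, Pi.single_apply] <;> module

theorem zfam_indep (B : Module.Basis (Fin 2) K A) : LinearIndependent K (zfam B) := by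
  rw [Fintype.linearIndependent_iff]
  intro c hc
  rw [zfam_sum, Prod.mk_eq_zero] at hc
  obtain ⟨h1, h2⟩ := hc
  have e1 := fun i j l => congrArg (fun x => B.repr x l)
    ((zphi1_tmul B c i j).symm.trans (LinearMap.congr_fun h1 _))
  have e2 := fun i j l => congrArg (fun x => (B.tensorProduct B).repr x (j, l))
    ((zphi2_apply B c i).symm.trans (LinearMap.congr_fun h2 _))
  have a0 := e1 0 0 0
  have a1 := e1 0 0 1
  have a2 := e1 1 1 0
  have a3 := e1 1 1 1
  have a4 := e2 0 0 0
  have a5 := e2 0 0 1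
  simp [Finsupp.single_apply] at a0 a1 a2 a3 a4 a5
  intro i
  fin_cases i <;> assumption

theorem zbasis_expand (B : Module.Basis (Fin 2) K A) (x : A) :
    ∃ a b : K, x = a • B 0 + b • B 1 :=
  ⟨B.repr x 0, B.repr x 1, by
    have h := (B.sum_repr x).symm
    rw [Fin.sum_univ_two] at h
    exact h⟩

theorem zbasis_expand2 (B : Module.Basis (Fin 2) K A) (x : A ⊗[K] A) :
    ∃ a b c d : K, x = a • (B 0 ⊗ₜ[K] B 0) + b • (B 0 ⊗ₜ[K] B 1) + c • (B 1 ⊗ₜ[K] B 0)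
      + d • (B 1 ⊗ₜ[K] B 1) :=
  ⟨(B.tensorProduct B).repr x (0, 0), (B.tensorProduct B).repr x (0, 1),
    (B.tensorProduct B).repr x (1, 0), (B.tensorProduct B).repr x (1, 1), by
    have h := ((B.tensorProduct B).sum_repr x).symm
    simp only [Fintype.sum_prod_type, Fin.sum_univ_two, Module.Basis.tensorProduct_apply] at h
    exact h.trans (by abel)⟩

theorem z_backward (B : Module.Basis (Fin 2) K A)
    (m00 : B 0 * B 0 = B 0) (m01 : B 0 * B 1 = B 1) (m10 : B 1 * B 0 = B 1)
    (m11 : B 1 * B 1 = B 0) (Δ : A →ₗ[K] A ⊗[K] A)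
    (hΔ0 : Δ (B 0) = B 0 ⊗ₜ[K] B 0 + B 1 ⊗ₜ[K] B 1)
    (hΔ1 : Δ (B 1) = B 0 ⊗ₜ[K] B 1 + B 1 ⊗ₜ[K] B 0) (c : Fin 6 → K) :
    d21 K A (zphi1 B c) = 0 ∧ d221 K A Δ (zphi1 B c) (zphi2 B c) = 0 ∧
      d23 K A Δ (zphi2 B c) = 0 := by
  refine ⟨?_, ?_, ?_⟩
  · refine ((B.tensorProduct B).tensorProduct B).ext fun ij => ?_
    obtain ⟨⟨i, j⟩, l⟩ := ij
    fin_cases i <;> fin_cases j <;> fin_cases l <;>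
      simp [d21, mu, asso, zphi1_tmul, m00, m01, m10, m11, add_mul, mul_add] <;> module
  · refine (B.tensorProduct B).ext fun ij => ?_
    obtain ⟨i, j⟩ := ij
    fin_cases i <;> fin_cases j <;>
      simp [d221, mu, asso, zphi1_tmul, zphi2_apply, m00, m01, m10, m11, hΔ0, hΔ1,
        add_tmul, tmul_add, tmul_smul, ← smul_tmul'] <;> module
  · refine B.ext fun i => ?_
    fin_cases i <;>
      simp [d23, asso, zphi2_apply, hΔ0, hΔ1, add_tmul, tmul_add, tmul_smul, ← smul_tmul'] <;> module

set_option maxHeartbeats 1000000 in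
theorem z_forward (B : Module.Basis (Fin 2) K A)
    (m00 : B 0 * B 0 = B 0) (m01 : B 0 * B 1 = B 1) (m10 : B 1 * B 0 = B 1)
    (m11 : B 1 * B 1 = B 0) (Δ : A →ₗ[K] A ⊗[K] A)
    (hΔ0 : Δ (B 0) = B 0 ⊗ₜ[K] B 0 + B 1 ⊗ₜ[K] B 1)
    (hΔ1 : Δ (B 1) = B 0 ⊗ₜ[K] B 1 + B 1 ⊗ₜ[K] B 0)
    (φ₁ : A ⊗[K] A →ₗ[K] A) (φ₂ : A →ₗ[K] A ⊗[K] A)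
    (h21 : d21 K A φ₁ = 0) (h22 : d221 K A Δ φ₁ φ₂ = 0) (h23 : d23 K A Δ φ₂ = 0) :
    ∃ c, zphi1 B c = φ₁ ∧ zphi2 B c = φ₂ := by
  obtain ⟨a000, a001, ha00⟩ := zbasis_expand B (φ₁ (B 0 ⊗ₜ[K] B 0))
  obtain ⟨a010, a011, ha01⟩ := zbasis_expand B (φ₁ (B 0 ⊗ₜ[K] B 1))
  obtain ⟨a100, a101, ha10⟩ := zbasis_expand B (φ₁ (B 1 ⊗ₜ[K] B 0))
  obtain ⟨a110, a111, ha11⟩ := zbasis_expand B (φ₁ (B 1 ⊗ₜ[K] B 1))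
  obtain ⟨b000, b001, b010, b011, hb0⟩ := zbasis_expand2 B (φ₂ (B 0))
  obtain ⟨b100, b101, b110, b111, hb1⟩ := zbasis_expand2 B (φ₂ (B 1))
  have e21 := fun i j l n => congrArg (fun x => B.repr x n)
    (LinearMap.congr_fun h21 ((B i ⊗ₜ[K] B j) ⊗ₜ[K] B l))
  have e22 := fun i j l n => congrArg (fun x => (B.tensorProduct B).repr x (l, n))
    (LinearMap.congr_fun h22 (B i ⊗ₜ[K] B j))
  have e23 := fun i j l n =>
    congrArg (fun x => ((B.tensorProduct B).tensorProduct B).repr x ((j, l), n))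
    (LinearMap.congr_fun h23 (B i))
  have p1 := e21 0 0 1 0
  have p2 := e21 0 0 1 1
  have p3 := e21 1 0 0 0
  have p4 := e21 1 0 0 1
  clear e21
  simp [d21, mu, asso, ha00, ha01, ha10, ha11, m00, m01, m10, m11, add_mul, mul_add,
    Finsupp.single_apply] at p1 p2 p3 p4
  have q := fun l n => e22 1 1 l n
  have r := fun l n => e23 0 0 l n
  clear e22 e23
  simp [d221, mu, asso, ha00, ha01, ha10, ha11, hb0, hb1, m00, m01, m10, m11, hΔ0, hΔ1,
        add_tmul, tmul_add, tmul_smul, ← smul_tmul', Finsupp.single_apply, Fin.forall_fin_two] at q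
  simp [d23, asso, hb0, hb1, hΔ0, hΔ1,
        add_tmul, tmul_add, tmul_smul, ← smul_tmul', Finsupp.single_apply, Fin.forall_fin_two] at r
  obtain ⟨⟨q1, q2⟩, q3, q4⟩ := q
  obtain ⟨r1, r2⟩ := r
  refine ⟨![a000, a001, a110, a111, b000, b001], ?_, ?_⟩
  · refine (B.tensorProduct B).ext fun ij => ?_
    obtain ⟨i, j⟩ := ij
    have t1 : a010 = a001 := by linear_combination -p1
    have t2 : a011 = a000 := by linear_combination -p2
    have t3 : a100 = a001 := by linear_combination p3
    have t4 : a101 = a000 := by linear_combination p4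
    fin_cases i <;> fin_cases j <;>
      simp [zphi1_tmul, ha00, ha01, ha10, ha11, t1, t2, t3, t4]
  · refine B.ext fun i => ?_
    have t1 : b010 = b001 := by linear_combination q3 + r1
    have t2 : b011 = a000 - a110 + b000 := by linear_combination q4 + p4 + r2
    have t3 : b100 = b001 := by linear_combination r1
    have t4 : b101 = b000 := by linear_combination r2
    have t5 : b110 = b000 := by linear_combination -q1
    have t6 : b111 = a111 - a001 + b001 := by linear_combination -q2 - p3
    fin_cases i <;>
      simp [zphi2_apply, hb0, hb1, t1, t2, t3, t4, t5, t6]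

/-- The basis `1, g` of the group algebra. -/
def zbasis (K : Type*) [Field K] : Module.Basis (Fin 2) K (GroupAlg K) :=
  Module.Basis.reindex
    (Module.Basis.ofRepr (MonoidAlgebra.coeffLinearEquiv (R := K) (S := K)
      (M := Multiplicative (ZMod 2))))
    (Multiplicative.toAdd.trans (ZMod.finEquiv 2).symm.toEquiv)

theorem zbasis_zero (K : Type*) [Field K] : zbasis K 0 = 1 := by
  rw [zbasis, Module.Basis.reindex_apply]
  rfl

theorem zbasis_one (K : Type*) [Field K] : zbasis K 1 = gElt K := by
  rw [zbasis, Module.Basis.reindex_apply]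
  rfl

theorem gElt_sq (K : Type*) [Field K] : gElt K * gElt K = 1 := by
  rw [gElt, ← map_mul, ← map_one (MonoidAlgebra.of K (Multiplicative (ZMod 2)))]
  congr 1

end Helpers

/-- for the group-algebra Frobenius algebra `A = k[ℤ/2]` (with
`Δ(1) = 1⊗1 + g⊗g`, `Δ(g) = 1⊗g + g⊗1`), the space `Z²_f(A;A)` of Frobenius 2-cocycles —
pairs `(φ₁,φ₂)` with `d^{2,1}(φ₁) = 0`, `d^{2,2}_{(1)}(φ₁,φ₂) = 0`, `d^{2,3}(φ₂) = 0` —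
has dimension 6 over `k`: it is the span of 6 linearly independent vectors. -/
theorem groupAlgebra_Z2_dim_six (K : Type*) [Field K]
    (Δ : GroupAlg K →ₗ[K] GroupAlg K ⊗[K] GroupAlg K)
    (hΔ1 : Δ 1 = (1 : GroupAlg K) ⊗ₜ[K] (1 : GroupAlg K) + gElt K ⊗ₜ[K] gElt K)
    (hΔg : Δ (gElt K) = (1 : GroupAlg K) ⊗ₜ[K] gElt K + gElt K ⊗ₜ[K] (1 : GroupAlg K)) :
    ∃ f : Fin 6 → (GroupAlg K ⊗[K] GroupAlg K →ₗ[K] GroupAlg K) ×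
        (GroupAlg K →ₗ[K] GroupAlg K ⊗[K] GroupAlg K),
      LinearIndependent K f ∧
      ∀ p : (GroupAlg K ⊗[K] GroupAlg K →ₗ[K] GroupAlg K) ×
          (GroupAlg K →ₗ[K] GroupAlg K ⊗[K] GroupAlg K),
        (d21 K (GroupAlg K) p.1 = 0 ∧ d221 K (GroupAlg K) Δ p.1 p.2 = 0 ∧
          d23 K (GroupAlg K) Δ p.2 = 0) ↔
        p ∈ Submodule.span K (Set.range f) := by
  have m00 : zbasis K 0 * zbasis K 0 = zbasis K 0 := by simp [zbasis_zero]
  have m01 : zbasis K 0 * zbasis K 1 = zbasis K 1 := by simp [zbasis_zero]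
  have m10 : zbasis K 1 * zbasis K 0 = zbasis K 1 := by simp [zbasis_zero]
  have m11 : zbasis K 1 * zbasis K 1 = zbasis K 0 := by
    rw [zbasis_zero, zbasis_one, gElt_sq]
  rw [← zbasis_zero, ← zbasis_one] at hΔ1 hΔg
  refine ⟨zfam (zbasis K), zfam_indep _, fun p => ?_⟩
  rw [Submodule.mem_span_range_iff_exists_fun]
  constructor
  · rintro ⟨h1, h2, h3⟩
    obtain ⟨c, hc1, hc2⟩ := z_forward (zbasis K) m00 m01 m10 m11 Δ hΔ1 hΔg p.1 p.2 h1 h2 h3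
    exact ⟨c, by rw [zfam_sum, hc1, hc2]⟩
  · rintro ⟨c, rfl⟩
    rw [zfam_sum]
    exact z_backward (zbasis K) m00 m01 m10 m11 Δ hΔ1 hΔg c
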